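/- Let K be a finite field with q elements, q ≥ 3, let s ≥ 2, and let T be the projective torus in ℙ^{s−1} over K. Let d be an integer with 1 ≤ d ≤ (q−2)(s−1) − 1 and write d = k(q−2) + ℓ with k ≥ 0 and 1 ≤ ℓ ≤ q−2. Then there exists a homogeneous polynomial F ∈ K[t_1,…,t_s] of degree d, not vanishing at every point of T, such that #{[x] ∈ T : F(x) = 0} = (q−1)^{s−k−2}·((q−1)^{k+1} − (q−1) + ℓ). -/

import Mathlib

open MvPolynomial

/-- The projective torus in `ℙ^(s-1)` over `K`: the classes of points all of whose
coordinates are nonzero (a condition invariant under scaling, tested on the chosen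
representative). -/
noncomputable def projTorus (K : Type) [Field K] (s : ℕ) :
    Set (Projectivization K (Fin s → K)) :=
  {p | ∀ i, p.rep i ≠ 0}

/-!
Normalising the first coordinate to `1` identifies the torus with `(Kˣ)ⁿ`, where `n = s - 1`.
For finite sets `A j ⊆ Kˣ`, the product of the linear forms `a t₀ - t_{j+1}` with `a ∈ A j` is
homogeneous of degree `∑ |A j|`, and its nonzeros on the torus are the points of the box
`∏ (A j)ᶜ`. Taking `k` of the sets equal to `Kˣ \ {1}`, one with `ℓ` elements and the rest empty,
the box has `(q - 1 - ℓ) (q - 1)^(s - k - 2)` points, out of `(q - 1)^(s - 1)` in the torus.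
-/

theorem eval_smul_of_isHomogeneous {σ R : Type*} [CommSemiring R] {F : MvPolynomial σ R} {d : ℕ}
    (hF : F.IsHomogeneous d) (c : R) (x : σ → R) : eval (c • x) F = c ^ d * eval x F := by
  rw [eval_eq, eval_eq, Finset.mul_sum]
  refine Finset.sum_congr rfl fun m hm => ?_
  have hdeg : ∑ i ∈ m.support, m i = d := hF.degree_eq_sum_deg_support hm |>.symm
  simp only [Pi.smul_apply, smul_eq_mul, mul_pow, Finset.prod_mul_distrib,
    Finset.prod_pow_eq_pow_sum, hdeg]
  ring

theorem eval_rep_mk_eq_zero_iff {ι K : Type*} [Field K] {F : MvPolynomial ι K} {d : ℕ}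
    (hF : F.IsHomogeneous d) {v : ι → K} (hv : v ≠ 0) :
    eval (Projectivization.mk K v hv).rep F = 0 ↔ eval v F = 0 := by
  obtain ⟨c, hc⟩ := Projectivization.exists_smul_eq_mk_rep K v hv
  rw [← hc, Units.smul_def, eval_smul_of_isHomogeneous hF]
  simp

theorem ncard_exists_mem_add_prod_card_sub {ι : Type*} [Fintype ι] {α : ι → Type*}
    [∀ i, Fintype (α i)] (A : ∀ i, Finset (α i)) :
    {y : ∀ i, α i | ∃ i, y i ∈ A i}.ncard + ∏ i, (Fintype.card (α i) - (A i).card) =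
      ∏ i, Fintype.card (α i) := by
  classical
  have hbox : {y : ∀ i, α i | ∃ i, y i ∈ A i} =
      ((Fintype.piFinset fun i => (A i)ᶜ)ᶜ : Finset (∀ i, α i)) := by
    ext y
    simp
  have hcard := Finset.card_compl_add_card (Fintype.piFinset fun i => (A i)ᶜ)
  rw [hbox, Set.ncard_coe_finset]
  simpa only [Fintype.card_piFinset, Finset.card_compl, Fintype.card_pi] using hcard

section Torus

variable {K : Type} [Field K] {n : ℕ}

theorem mk_mem_projTorus_iff {s : ℕ} {v : Fin s → K} (hv : v ≠ 0) :
    Projectivization.mk K v hv ∈ projTorus K s ↔ ∀ i, v i ≠ 0 := by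
  obtain ⟨c, hc⟩ := Projectivization.exists_smul_eq_mk_rep K v hv
  simp [projTorus, ← hc, Units.smul_def]

/-- The affine vector `(1, y₁, …, yₙ)`, the representative with first coordinate `1` of a point of
the projective torus. -/
def torusVec (y : Fin n → Kˣ) : Fin (n + 1) → K :=
  Fin.cons 1 fun j => (y j : K)

@[simp]
theorem torusVec_zero (y : Fin n → Kˣ) : torusVec y 0 = 1 := rfl

@[simp]
theorem torusVec_succ (y : Fin n → Kˣ) (j : Fin n) : torusVec y j.succ = y j := rfl

theorem torusVec_apply_ne_zero (y : Fin n → Kˣ) (i : Fin (n + 1)) : torusVec y i ≠ 0 := by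
  cases i using Fin.cases <;> simp

theorem torusVec_ne_zero (y : Fin n → Kˣ) : torusVec y ≠ 0 :=
  fun h => torusVec_apply_ne_zero y 0 (congrFun h 0)

/-- The point `[1 : y₁ : ⋯ : yₙ]`, which parametrises the projective torus by `(Kˣ)ⁿ`. -/
def torusPoint (y : Fin n → Kˣ) : Projectivization K (Fin (n + 1) → K) :=
  Projectivization.mk K (torusVec y) (torusVec_ne_zero y)

theorem torusPoint_mem_projTorus (y : Fin n → Kˣ) : torusPoint y ∈ projTorus K (n + 1) :=
  (mk_mem_projTorus_iff _).2 (torusVec_apply_ne_zero y)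

theorem torusPoint_injective :
    Function.Injective (torusPoint : (Fin n → Kˣ) → Projectivization K (Fin (n + 1) → K)) := by
  intro y z hyz
  obtain ⟨c, hc⟩ := (Projectivization.mk_eq_mk_iff' K _ _ _ _).1 hyz
  have hc_one : c = 1 := by simpa using congrFun hc 0
  funext j
  simpa [hc_one, Units.ext_iff, eq_comm] using congrFun hc j.succ

theorem exists_torusPoint_eq {p : Projectivization K (Fin (n + 1) → K)}
    (hp : p ∈ projTorus K (n + 1)) : ∃ y, torusPoint y = p := by
  induction p using Projectivization.ind with | h v hv =>
  have hv_ne := (mk_mem_projTorus_iff hv).1 hp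
  refine ⟨fun j => Units.mk0 (v j.succ / v 0) (div_ne_zero (hv_ne _) (hv_ne _)), ?_⟩
  refine (Projectivization.mk_eq_mk_iff' K _ _ _ _).2 ⟨(v 0)⁻¹, funext fun i => ?_⟩
  cases i using Fin.cases with
  | zero => simp [hv_ne 0]
  | succ j => simp [div_eq_inv_mul]

theorem ncard_projTorus_sep (P : Projectivization K (Fin (n + 1) → K) → Prop) :
    {p ∈ projTorus K (n + 1) | P p}.ncard = {y : Fin n → Kˣ | P (torusPoint y)}.ncard := by
  have himage : {p ∈ projTorus K (n + 1) | P p} = torusPoint '' {y | P (torusPoint y)} := by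
    ext p
    constructor
    · rintro ⟨hp, hPp⟩
      obtain ⟨y, rfl⟩ := exists_torusPoint_eq hp
      exact ⟨y, hPp, rfl⟩
    · rintro ⟨y, hPy, rfl⟩
      exact ⟨torusPoint_mem_projTorus y, hPy⟩
  rw [himage, Set.ncard_image_of_injective _ torusPoint_injective]

/-- The product of the linear forms `a t₀ - t_{j+1}` over all `j` and all `a ∈ A j`. -/
noncomputable def linearFormProd (A : Fin n → Finset Kˣ) : MvPolynomial (Fin (n + 1)) K :=
  ∏ j, ∏ a ∈ A j, (C (a : K) * X 0 - X j.succ)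

theorem isHomogeneous_linearFormProd (A : Fin n → Finset Kˣ) :
    (linearFormProd A).IsHomogeneous (∑ j, (A j).card) := by
  refine IsHomogeneous.prod _ _ _ fun j _ => ?_
  rw [Finset.card_eq_sum_ones]
  exact IsHomogeneous.prod _ _ _ fun a _ =>
    (isHomogeneous_C_mul_X (a : K) 0).sub (isHomogeneous_X K j.succ)

theorem eval_torusVec_linearFormProd_eq_zero_iff (A : Fin n → Finset Kˣ) (y : Fin n → Kˣ) :
    eval (torusVec y) (linearFormProd A) = 0 ↔ ∃ j, y j ∈ A j := by
  simp [linearFormProd, Finset.prod_eq_zero_iff, sub_eq_zero, Units.val_inj]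

theorem eval_rep_torusPoint_linearFormProd_eq_zero_iff (A : Fin n → Finset Kˣ) (y : Fin n → Kˣ) :
    eval (torusPoint y).rep (linearFormProd A) = 0 ↔ ∃ j, y j ∈ A j :=
  (eval_rep_mk_eq_zero_iff (isHomogeneous_linearFormProd A) _).trans
    (eval_torusVec_linearFormProd_eq_zero_iff A y)

theorem ncard_zeros_linearFormProd_add_prod [Fintype Kˣ] (A : Fin n → Finset Kˣ) :
    {p ∈ projTorus K (n + 1) | eval p.rep (linearFormProd A) = 0}.ncard +
      ∏ j, (Fintype.card Kˣ - (A j).card) = Fintype.card Kˣ ^ n := by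
  simpa [ncard_projTorus_sep, eval_rep_torusPoint_linearFormProd_eq_zero_iff] using
    ncard_exists_mem_add_prod_card_sub A

end Torus

section RootSets

variable {G : Type*} [Fintype G] [DecidableEq G] [One G]

/-- The family of sets of ratios `t_{j+1} / t₀` used for the extremal polynomial: `k` copies of
`G \ {1}`, then `B`, then `m` empty sets. -/
def extremalRootSets (k m : ℕ) (B : Finset G) : Fin (k + 1 + m) → Finset G :=
  Fin.append (Fin.snoc (fun _ : Fin k => {1}ᶜ) B) fun _ => ∅

theorem one_notMem_extremalRootSets {k m : ℕ} {B : Finset G} (hB : 1 ∉ B) (j : Fin (k + 1 + m)) :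
    1 ∉ extremalRootSets k m B j := by
  cases j using Fin.addCases with
  | left i => cases i using Fin.lastCases <;> simp [extremalRootSets, hB]
  | right i => simp [extremalRootSets]

theorem sum_card_extremalRootSets (k m : ℕ) (B : Finset G) :
    ∑ j, (extremalRootSets k m B j).card = k * (Fintype.card G - 1) + B.card := by
  simp [extremalRootSets, Fin.sum_univ_add, Fin.sum_univ_castSucc, Finset.card_compl]

theorem prod_card_sub_card_extremalRootSets (k m : ℕ) (B : Finset G) :
    ∏ j, (Fintype.card G - (extremalRootSets k m B j).card) =
      (Fintype.card G - B.card) * Fintype.card G ^ m := by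
  have hone : Fintype.card G - (Fintype.card G - 1) = 1 := Nat.sub_sub_self Fintype.card_pos
  simp [extremalRootSets, Fin.prod_univ_add, Fin.prod_univ_castSucc, Finset.card_compl, hone]

end RootSets

theorem pow_mul_pow_sub_add_add_sub_mul_pow {Q ℓ : ℕ} (k m : ℕ) (hℓ : ℓ ≤ Q) :
    Q ^ m * (Q ^ (k + 1) - Q + ℓ) + (Q - ℓ) * Q ^ m = Q ^ (k + 1 + m) := by
  have hQ : Q ≤ Q ^ (k + 1) := Nat.le_self_pow k.succ_ne_zero Q
  calc
    _ = Q ^ m * (Q ^ (k + 1) - Q + ℓ + (Q - ℓ)) := by ring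
    _ = Q ^ m * Q ^ (k + 1) := by congr 1; omega
    _ = Q ^ (k + 1 + m) := by rw [← pow_add, add_comm]

/-- There exists a homogeneous polynomial of degree `d = k(q-2) + ℓ`,
`1 ≤ d ≤ (q-2)(s-1) - 1`, not vanishing at every point of the projective torus, with
exactly `(q-1)^(s-k-2) * ((q-1)^(k+1) - (q-1) + ℓ)` zeros on the torus. -/
theorem stmt_6 (K : Type) [Field K] [Fintype K] (q s d k ℓ : ℕ)
    (hK : Fintype.card K = q) (hq : 3 ≤ q) (hs : 2 ≤ s)
    (hd1 : 1 ≤ d) (hd2 : d ≤ (q - 2) * (s - 1) - 1)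
    (hdk : d = k * (q - 2) + ℓ) (hl1 : 1 ≤ ℓ) (hl2 : ℓ ≤ q - 2) :
    ∃ F : MvPolynomial (Fin s) K, F.IsHomogeneous d ∧
      (∃ p ∈ projTorus K s, eval p.rep F ≠ 0) ∧
      Set.ncard {p ∈ projTorus K s | eval p.rep F = 0} =
        (q - 1) ^ (s - k - 2) * ((q - 1) ^ (k + 1) - (q - 1) + ℓ) := by
  classical
  have hunits : Fintype.card Kˣ = q - 1 := by rw [Fintype.card_units, hK]
  have hk : (q - 2) * k < (q - 2) * (s - 1) := by rw [mul_comm _ k]; omega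
  obtain ⟨m, rfl⟩ : ∃ m, s = k + 1 + m + 1 :=
    ⟨s - k - 2, by have := Nat.lt_of_mul_lt_mul_left hk; omega⟩
  obtain ⟨B, hB, rfl⟩ : ∃ B ⊆ ({1}ᶜ : Finset Kˣ), B.card = ℓ :=
    Finset.exists_subset_card_eq (by rw [Finset.card_compl, Finset.card_singleton]; omega)
  have hB_one : 1 ∉ B := fun h => by simpa using hB h
  refine ⟨linearFormProd (extremalRootSets k m B), ?_,
    ⟨torusPoint 1, torusPoint_mem_projTorus 1, ?_⟩, ?_⟩
  · have hdeg := sum_card_extremalRootSets k m B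
    rw [hunits, Nat.sub_sub, ← hdk] at hdeg
    exact hdeg ▸ isHomogeneous_linearFormProd _
  · rw [Ne, eval_rep_torusPoint_linearFormProd_eq_zero_iff, not_exists]
    exact one_notMem_extremalRootSets hB_one
  · have hcount := ncard_zeros_linearFormProd_add_prod (extremalRootSets k m B)
    rw [prod_card_sub_card_extremalRootSets, hunits] at hcount
    have hexp : k + 1 + m + 1 - k - 2 = m := by omega
    rw [hexp]
    exact Nat.add_right_cancel
      (hcount.trans (pow_mul_pow_sub_add_add_sub_mul_pow k m (by omega)).symm)
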